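/- Let w_max and w_min be, respectively, the largest and the smallest width of Ω over all directions. Then for every u ∈ 𝒰_Ω and all unit vectors h₁, h₂ ∈ ℝ² one has ‖u_{h₁}‖₁ ≤ 2 (w_max / w_min) ‖u_{h₂}‖₁. -/

import Mathlib

open Set MeasureTheory
open scoped ENNReal

/-- Partial derivative of `u` in the `x` direction (junk value where `u` is not
differentiable). -/
noncomputable def ux (u : ℝ × ℝ → ℝ) (z : ℝ × ℝ) : ℝ := fderiv ℝ u z (1, 0)

/-- Partial derivative of `u` in the `y` direction. -/
noncomputable def uy (u : ℝ × ℝ → ℝ) (z : ℝ × ℝ) : ℝ := fderiv ℝ u z (0, 1)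

/-- Directional derivative of `u` in the direction `h`. -/
noncomputable def uh (h : ℝ × ℝ) (u : ℝ × ℝ → ℝ) (z : ℝ × ℝ) : ℝ := fderiv ℝ u z h

/-- The class `𝒰_Ω`: continuous concave functions on `Ω` vanishing on the boundary,
with uniformly bounded gradient over all interior points where it exists. -/
def MemU (Ω : Set (ℝ × ℝ)) (u : ℝ × ℝ → ℝ) : Prop :=
  ContinuousOn u Ω ∧ ConcaveOn ℝ Ω u ∧ (∀ z ∈ frontier Ω, u z = 0) ∧
    ∃ C : ℝ, ∀ z ∈ interior Ω, ∀ g : (ℝ × ℝ) →L[ℝ] ℝ, HasFDerivAt u g z → ‖g‖ ≤ C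

/-- The `L¹` norm of `f` over `Ω`. -/
noncomputable def L1N (Ω : Set (ℝ × ℝ)) (f : ℝ × ℝ → ℝ) : ℝ := ∫ z in Ω, |f z|

/-- The `L^p` norm of `f` over `Ω`, `p ∈ [1, ∞)`. -/
noncomputable def LpN (Ω : Set (ℝ × ℝ)) (p : ℝ) (f : ℝ × ℝ → ℝ) : ℝ :=
  (∫ z in Ω, |f z| ^ p) ^ (1 / p)

/-- The `L^∞` norm (essential supremum) of `f` over `Ω`. -/
noncomputable def LinfN (Ω : Set (ℝ × ℝ)) (f : ℝ × ℝ → ℝ) : ℝ≥0∞ :=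
  essSup (fun z => ENNReal.ofReal |f z|) (volume.restrict Ω)

/-- The width of `Ω` parallel to the (Euclidean unit) vector `h`: the distance between the
two lines of support of `Ω` parallel to `h`, i.e. the oscillation over `Ω` of the linear
functional given by the unit normal `(-h.2, h.1)` to `h`. -/
noncomputable def widthPar (Ω : Set (ℝ × ℝ)) (h : ℝ × ℝ) : ℝ :=
  sSup ((fun z : ℝ × ℝ => -h.2 * z.1 + h.1 * z.2) '' Ω) -
    sInf ((fun z : ℝ × ℝ => -h.2 * z.1 + h.1 * z.2) '' Ω)

/-!
Restrict a concave `u ≥ 0` vanishing on `∂Ω` to a chord of `Ω` parallel to the unit vector `h`: it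
rises from `0` to its maximum `m` on the chord and falls back to `0`, so `|u_h|` integrates to `2m`
along the chord. By Fubini `‖u_h‖₁ = 2 ∫ m`, an integral over the projection of `Ω` onto the normal
of `h`, an interval whose length is the width of `Ω` parallel to `h`. There `m` is again concave and
nonnegative and has the same maximum `M` as `u`, so its mean value lies between `M / 2` and `M`.
Hence `M * widthPar Ω h ≤ ‖u_h‖₁ ≤ 2 * M * widthPar Ω h`, and comparing two directions gives the
claim.
-/

section Line

lemma exists_eq_Ioo_of_isOpen_of_convex {S : Set ℝ} (ho : IsOpen S) (hconv : Convex ℝ S)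
    (hb : Bornology.IsBounded S) (hne : S.Nonempty) :
    ∃ a b, a < b ∧ S = Ioo a b := by
  have hcl : closure S = Icc (sInf (closure S)) (sSup (closure S)) :=
    eq_Icc_of_connected_compact ⟨hne.closure, hconv.closure.isPreconnected⟩ hb.isCompact_closure
  have hS : S = Ioo (sInf (closure S)) (sSup (closure S)) := by
    rw [← interior_Icc, ← hcl, hconv.interior_closure_eq_interior_of_nonempty_interior
      (by rwa [ho.interior_eq]), ho.interior_eq]
  exact ⟨_, _, nonempty_Ioo.1 (hS ▸ hne), hS⟩

section Monotone

variable {𝕜 β : Type*} [Field 𝕜] [LinearOrder 𝕜] [IsStrictOrderedRing 𝕜] [AddCommGroup β]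
  [LinearOrder β] [IsOrderedAddMonoid β] [Module 𝕜 β] [IsStrictOrderedModule 𝕜 β]
  {s : Set 𝕜} {f : 𝕜 → β} {c : 𝕜}

lemma monotoneOn_inter_Iic_of_concaveOn_of_isMaxOn (hf : ConcaveOn 𝕜 s f) (hc : c ∈ s)
    (hmax : IsMaxOn f s c) : MonotoneOn f (s ∩ Iic c) := by
  intro x hx y hy hxy
  simpa [min_eq_left (hmax hx.1)] using hf.min_le_of_mem_Icc hx.1 hc ⟨hxy, hy.2⟩

lemma antitoneOn_inter_Ici_of_concaveOn_of_isMaxOn (hf : ConcaveOn 𝕜 s f) (hc : c ∈ s)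
    (hmax : IsMaxOn f s c) : AntitoneOn f (s ∩ Ici c) := by
  intro x hx y hy hxy
  simpa [min_eq_right (hmax hy.1)] using hf.min_le_of_mem_Icc hc hy.1 ⟨hx.2, hxy⟩

end Monotone

variable {f f' : ℝ → ℝ} {a b c : ℝ}

lemma lintegral_enorm_rightDeriv_of_monotoneOn (hab : a ≤ b) (hcont : ContinuousOn f (Icc a b))
    (hmono : MonotoneOn f (Icc a b))
    (hderiv : ∀ s ∈ Ioo a b, HasDerivWithinAt f (f' s) (Ioi s) s) :
    ∫⁻ s in Ioo a b, ‖f' s‖ₑ = ENNReal.ofReal (f b - f a) := by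
  have hnonneg : ∀ s ∈ Ioo a b, 0 ≤ f' s := fun s hs => by
    have hd : HasDerivWithinAt f (f' s) (Ioo s b) s := (hderiv s hs).mono Ioo_subset_Ioi_self
    refine hd.nonneg_of_monotoneOn ?_
      (hmono.mono (Ioo_subset_Icc_self.trans (Icc_subset_Icc_left hs.1.le)))
    rw [accPt_principal_iff_nhdsWithin, sdiff_singleton_eq_self (by simp)]
    exact left_nhdsWithin_Ioo_neBot hs.2
  have hint : IntegrableOn f' (Ioc a b) :=
    intervalIntegral.integrableOn_deriv_right_of_nonneg hcont hderiv hnonneg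
  have hFTC : ∫ s in Ioo a b, f' s = f b - f a := by
    rw [← integral_Ioc_eq_integral_Ioo, ← intervalIntegral.integral_of_le hab]
    exact intervalIntegral.integral_eq_sub_of_hasDeriv_right_of_le hab hcont hderiv
      ((intervalIntegrable_iff_integrableOn_Ioc_of_le hab).2 hint)
  rw [← hFTC, ofReal_integral_eq_lintegral_ofReal (hint.mono_set Ioo_subset_Ioc_self)
    ((ae_restrict_iff' measurableSet_Ioo).2 (.of_forall hnonneg))]
  exact setLIntegral_congr_fun measurableSet_Ioo fun s hs => Real.enorm_of_nonneg (hnonneg s hs)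

lemma lintegral_enorm_rightDeriv_of_antitoneOn (hab : a ≤ b) (hcont : ContinuousOn f (Icc a b))
    (hanti : AntitoneOn f (Icc a b))
    (hderiv : ∀ s ∈ Ioo a b, HasDerivWithinAt f (f' s) (Ioi s) s) :
    ∫⁻ s in Ioo a b, ‖f' s‖ₑ = ENNReal.ofReal (f a - f b) := by
  simpa [enorm_neg, neg_add_eq_sub] using
    lintegral_enorm_rightDeriv_of_monotoneOn hab hcont.neg hanti.neg fun s hs => (hderiv s hs).neg

lemma lintegral_enorm_rightDeriv_of_concaveOn (hcont : ContinuousOn f (Icc a b))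
    (hf : ConcaveOn ℝ (Icc a b) f) (hc : c ∈ Icc a b) (hmax : IsMaxOn f (Icc a b) c) :
    ∫⁻ s in Ioo a b, ‖derivWithin f (Ioi s) s‖ₑ =
      ENNReal.ofReal (f c - f a) + ENNReal.ofReal (f c - f b) := by
  have hderiv : ∀ s ∈ Ioo a b, HasDerivWithinAt f (derivWithin f (Ioi s) s) (Ioi s) s :=
    fun s hs => by
      have hs' : s ∈ interior (Icc a b) := by rwa [interior_Icc]
      simpa using (hf.neg.differentiableWithinAt_Ioi_of_mem_interior hs').neg.hasDerivWithinAt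
  have hleft := lintegral_enorm_rightDeriv_of_monotoneOn hc.1
    (hcont.mono (Icc_subset_Icc_right hc.2))
    ((monotoneOn_inter_Iic_of_concaveOn_of_isMaxOn hf hc hmax).mono
      fun s hs => ⟨⟨hs.1, hs.2.trans hc.2⟩, hs.2⟩)
    fun s hs => hderiv s ⟨hs.1, hs.2.trans_le hc.2⟩
  have hright := lintegral_enorm_rightDeriv_of_antitoneOn hc.2
    (hcont.mono (Icc_subset_Icc_left hc.1))
    ((antitoneOn_inter_Ici_of_concaveOn_of_isMaxOn hf hc hmax).mono
      fun s hs => ⟨⟨hc.1.trans hs.1, hs.2⟩, hs.1⟩)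
    fun s hs => hderiv s ⟨hc.1.trans_lt hs.1, hs.2⟩
  rw [← hleft, ← hright]
  simp only [restrict_Ioo_eq_restrict_Ioc]
  rw [← lintegral_union measurableSet_Ioc (Ioc_disjoint_Ioc_of_le le_rfl),
    Ioc_union_Ioc_eq_Ioc hc.1 hc.2]

end Line

lemma ae_differentiableAt_of_concaveOn {E : Type*} [NormedAddCommGroup E] [NormedSpace ℝ E]
    [FiniteDimensional ℝ E] [MeasurableSpace E] [BorelSpace E] (μ : Measure E)
    [μ.IsAddHaarMeasure] {s : Set E} {f : E → ℝ} (hf : ConcaveOn ℝ s f) :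
    ∀ᵐ x ∂μ, x ∈ interior s → DifferentiableAt ℝ f x := by
  refine measure_null_of_locally_null _ fun x hx => ?_
  obtain ⟨hxs, -⟩ := Classical.not_imp.1 hx
  obtain ⟨K, t, ht, hK⟩ := hf.locallyLipschitzOn_interior hxs
  rw [isOpen_interior.nhdsWithin_eq hxs] at ht
  obtain ⟨v, hvt, hv, hxv⟩ := mem_nhds_iff.1 ht
  refine ⟨_, Filter.inter_mem (mem_nhdsWithin_of_mem_nhds (hv.mem_nhds hxv)) self_mem_nhdsWithin,
    measure_mono_null ?_ (ae_iff.1 ((hK.mono hvt).ae_differentiableWithinAt_of_mem (μ := μ)))⟩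
  rintro y ⟨hyv, hy⟩ hdiff
  exact hy fun _ => (hdiff hyv).differentiableAt (hv.mem_nhds hyv)

lemma aestronglyMeasurable_restrict_of_concaveOn {E : Type*} [NormedAddCommGroup E]
    [NormedSpace ℝ E] [FiniteDimensional ℝ E] [MeasurableSpace E] [BorelSpace E] (μ : Measure E)
    [μ.IsAddHaarMeasure] {s : Set E} {f : E → ℝ} (hf : ConcaveOn ℝ s f) :
    AEStronglyMeasurable f (μ.restrict s) := by
  rw [← Measure.restrict_congr_set (interior_ae_eq_of_null_frontier (hf.1.addHaar_frontier μ))]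
  exact hf.continuousOn_interior.aestronglyMeasurable isOpen_interior.measurableSet

lemma closure_preimage_interior_of_convex {E F : Type*} [NormedAddCommGroup E] [NormedSpace ℝ E]
    [NormedAddCommGroup F] [NormedSpace ℝ F] {f : E →ᵃ[ℝ] F} (hf : Continuous f) {K : Set F}
    (hK : IsClosed K) (hconv : Convex ℝ K) (hne : (f ⁻¹' interior K).Nonempty) :
    closure (f ⁻¹' interior K) = f ⁻¹' K := by
  obtain ⟨y, hy⟩ := hne
  refine (closure_minimal (preimage_mono interior_subset) (hK.preimage hf)).antisymm fun x hx => ?_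
  have hseg : openSegment ℝ x y ⊆ f ⁻¹' interior K := by
    rw [← image_subset_iff, image_openSegment]
    exact hconv.openSegment_self_interior_subset_interior hx hy
  exact closure_mono hseg (segment_subset_closure_openSegment (left_mem_segment ℝ x y))

section Chord

variable {E : Type*} [NormedAddCommGroup E] [NormedSpace ℝ E] {K : Set E} {u : E → ℝ}
  {γ : ℝ →ᵃ[ℝ] E}

lemma exists_preimage_eq_Icc_of_isCompact_of_convex (hK : IsCompact K) (hconv : Convex ℝ K)
    (hγ : Function.Injective γ) (hne : (γ ⁻¹' interior K).Nonempty) :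
    ∃ a b, γ ⁻¹' K = Icc a b ∧ γ ⁻¹' interior K = Ioo a b ∧
      γ a ∈ frontier K ∧ γ b ∈ frontier K := by
  have hcont : Continuous γ := γ.continuous_of_finiteDimensional
  have hline : AffineMap.lineMap (γ 0) (γ 1) = γ := by
    refine AffineMap.ext fun s => ?_
    rw [← AffineMap.apply_lineMap]
    simp [AffineMap.lineMap_apply]
  have hbounded : Bornology.IsBounded (γ ⁻¹' interior K) := by
    rw [← hline]
    exact (antilipschitzWith_lineMap (hγ.ne zero_ne_one)).isBounded_preimage
      (hK.isBounded.subset interior_subset)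
  obtain ⟨a, b, hab, hIoo⟩ := exists_eq_Ioo_of_isOpen_of_convex (isOpen_interior.preimage hcont)
    (hconv.interior.affine_preimage γ) hbounded hne
  have hIcc : γ ⁻¹' K = Icc a b := by
    rw [← closure_preimage_interior_of_convex hcont hK.isClosed hconv hne, hIoo,
      closure_Ioo hab.ne]
  have hfrontier : ∀ s ∈ Icc a b \ Ioo a b, γ s ∈ frontier K := fun s hs => by
    rwa [hK.isClosed.frontier_eq, ← mem_preimage, preimage_sdiff, hIcc, hIoo]
  exact ⟨a, b, hIcc, hIoo, hfrontier a (by simp [hab.le]), hfrontier b (by simp [hab.le])⟩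

lemma nonneg_of_concaveOn_of_eq_zero_on_frontier [Nontrivial E] (hK : IsCompact K)
    (hu : ConcaveOn ℝ K u) (h0 : ∀ z ∈ frontier K, u z = 0) {z : E} (hz : z ∈ K) : 0 ≤ u z := by
  by_cases hzint : z ∈ interior K
  swap
  · exact (h0 z ⟨subset_closure hz, hzint⟩).ge
  obtain ⟨w, hw⟩ := exists_ne z
  obtain ⟨a, b, hIcc, -, ha, hb⟩ := exists_preimage_eq_Icc_of_isCompact_of_convex hK hu.1
    (AffineMap.lineMap_injective ℝ hw.symm) ⟨0, by simpa using hzint⟩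
  have h0ab : (0 : ℝ) ∈ Icc a b := hIcc.subset (by simpa using hz)
  simpa [h0 _ ha, h0 _ hb] using (hu.comp_affineMap (AffineMap.lineMap z w)).min_le_of_mem_Icc
    (hK.isClosed.frontier_subset ha) (hK.isClosed.frontier_subset hb) h0ab

-- Almost everywhere the integrand is the right derivative of the concave function `u ∘ γ`.
lemma lintegral_enorm_fderiv_comp_affineMap (hK : IsCompact K) (hcont : ContinuousOn u K)
    (hu : ConcaveOn ℝ K u) (h0 : ∀ z ∈ frontier K, u z = 0) (hγ : Function.Injective γ)
    (hdiff : ∀ᵐ s, γ s ∈ interior K → DifferentiableAt ℝ u (γ s)) {c : ℝ} (hc : γ c ∈ K)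
    (hmax : IsMaxOn (u ∘ γ) (γ ⁻¹' K) c) :
    ∫⁻ s in γ ⁻¹' interior K, ‖fderiv ℝ u (γ s) (γ.linear 1)‖ₑ =
      2 * ENNReal.ofReal (u (γ c)) := by
  rcases (γ ⁻¹' interior K).eq_empty_or_nonempty with hempty | hne
  · have hcint : γ c ∉ interior K := fun h => notMem_empty c (hempty.subset h)
    simp [hempty, h0 _ ⟨subset_closure hc, hcint⟩]
  obtain ⟨a, b, hIcc, hIoo, ha, hb⟩ :=
    exists_preimage_eq_Icc_of_isCompact_of_convex hK hu.1 hγ hne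
  have hvar := lintegral_enorm_rightDeriv_of_concaveOn (f := u ∘ γ) (a := a) (b := b)
    (hIcc ▸ hcont.comp γ.continuous_of_finiteDimensional.continuousOn (mapsTo_preimage γ K))
    (hIcc ▸ hu.comp_affineMap γ) (hIcc ▸ hc) (hIcc ▸ hmax)
  simp only [Function.comp_apply, h0 _ ha, h0 _ hb, sub_zero, ← two_mul] at hvar
  rw [hIoo, ← hvar]
  refine setLIntegral_congr_fun_ae measurableSet_Ioo ?_
  filter_upwards [hdiff] with s hs hsI
  have hderiv := (hs (hIoo.superset hsI)).hasFDerivAt.comp_hasDerivAt s γ.hasDerivAt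
  rw [hderiv.hasDerivWithinAt.derivWithin (uniqueDiffWithinAt_Ioi s)]

end Chord

/-- The marginal of `u : K → ℝ` along `π`: its largest value on the fibre of `π` over `y`. For a
coordinate projection it records the maximum of `u` on each chord of `K` in the complementary
direction. Outside `π '' K` it has the junk value `0`. -/
noncomputable def fiberSup {E F : Type*} (π : E → F) (K : Set E) (u : E → ℝ) (y : F) : ℝ :=
  sSup (u '' (K ∩ π ⁻¹' {y}))

lemma fiberSup_nonneg {E F : Type*} {π : E → F} {K : Set E} {u : E → ℝ} (h : ∀ z ∈ K, 0 ≤ u z)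
    (y : F) : 0 ≤ fiberSup π K u y :=
  Real.sSup_nonneg (forall_mem_image.2 fun z hz => h z hz.1)

lemma fiberSup_of_notMem {E F : Type*} {π : E → F} {K : Set E} {u : E → ℝ} {y : F}
    (hy : y ∉ π '' K) : fiberSup π K u y = 0 := by
  have hempty : K ∩ π ⁻¹' {y} = ∅ := eq_empty_of_forall_notMem fun z hz => hy ⟨z, hz⟩
  rw [fiberSup, hempty, image_empty, Real.sSup_empty]

section FiberSup

variable {E F : Type*} [TopologicalSpace E] [TopologicalSpace F] [T1Space F] {π : E → F}
  {K : Set E} {u : E → ℝ}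

lemma isCompact_image_inter_fiber (hπ : Continuous π) (hK : IsCompact K)
    (hu : ContinuousOn u K) (y : F) : IsCompact (u '' (K ∩ π ⁻¹' {y})) :=
  (hK.inter_right (isClosed_singleton.preimage hπ)).image_of_continuousOn
    (hu.mono inter_subset_left)

lemma le_fiberSup (hπ : Continuous π) (hK : IsCompact K) (hu : ContinuousOn u K) {z : E}
    (hz : z ∈ K) : u z ≤ fiberSup π K u (π z) :=
  le_csSup (isCompact_image_inter_fiber hπ hK hu _).bddAbove ⟨z, ⟨hz, rfl⟩, rfl⟩

lemma exists_eq_fiberSup (hπ : Continuous π) (hK : IsCompact K) (hu : ContinuousOn u K) {y : F}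
    (hy : y ∈ π '' K) : ∃ z ∈ K, π z = y ∧ u z = fiberSup π K u y := by
  obtain ⟨w, hw, hwy⟩ := hy
  obtain ⟨z, ⟨hz, hzy⟩, hzu⟩ :=
    (isCompact_image_inter_fiber hπ hK hu y).sSup_mem ⟨u w, w, ⟨hw, hwy⟩, rfl⟩
  exact ⟨z, hz, hzy, hzu⟩

lemma isMaxOn_fiberSup (hπ : Continuous π) (hK : IsCompact K) (hu : ContinuousOn u K) {z : E}
    (hz : z ∈ K) (hmax : IsMaxOn u K z) : IsMaxOn (fiberSup π K u) (π '' K) (π z) := by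
  intro y hy
  obtain ⟨w, hw, -, hwy⟩ := exists_eq_fiberSup hπ hK hu hy
  exact hwy.ge.trans ((hmax hw).trans (le_fiberSup hπ hK hu hz))

lemma fiberSup_eq_of_isMaxOn (hπ : Continuous π) (hK : IsCompact K) (hu : ContinuousOn u K) {z : E}
    (hz : z ∈ K) (hmax : IsMaxOn u K z) : fiberSup π K u (π z) = u z := by
  obtain ⟨w, hw, -, hwz⟩ := exists_eq_fiberSup hπ hK hu (mem_image_of_mem π hz)
  exact (hwz.ge.trans (hmax hw)).antisymm (le_fiberSup hπ hK hu hz)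

end FiberSup

lemma concaveOn_fiberSup {E F : Type*} [AddCommGroup E] [Module ℝ E] [TopologicalSpace E]
    [AddCommGroup F] [Module ℝ F] [TopologicalSpace F] [T1Space F] {π : E →L[ℝ] F} {K : Set E}
    {u : E → ℝ} (hK : IsCompact K) (hcont : ContinuousOn u K) (hu : ConcaveOn ℝ K u) :
    ConcaveOn ℝ (π '' K) (fiberSup π K u) := by
  refine ⟨hu.1.linear_image π.toLinearMap, fun x hx y hy s t hs ht hst => ?_⟩
  obtain ⟨z, hz, rfl, hzx⟩ := exists_eq_fiberSup π.continuous hK hcont hx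
  obtain ⟨w, hw, rfl, hwy⟩ := exists_eq_fiberSup π.continuous hK hcont hy
  rw [← hzx, ← hwy, ← map_smul, ← map_smul, ← map_add]
  exact (hu.2 hz hw hs ht hst).trans
    (le_fiberSup π.continuous hK hcont (hu.1 hz hw hs ht hst))

section Fubini

variable {E F : Type*} [NormedAddCommGroup E] [NormedSpace ℝ E] [NormedAddCommGroup F]
  [NormedSpace ℝ F] {K : Set E} {u : E → ℝ} {e : E ≃L[ℝ] F × ℝ}

lemma lintegral_fiber_enorm_fderiv (hK : IsCompact K) (hcont : ContinuousOn u K)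
    (hu : ConcaveOn ℝ K u) (h0 : ∀ z ∈ frontier K, u z = 0) {y : F}
    (hdiff : ∀ᵐ s : ℝ, e.symm (y, s) ∈ interior K → DifferentiableAt ℝ u (e.symm (y, s))) :
    ∫⁻ s, (interior K).indicator (fun z => ‖fderiv ℝ u z (e.symm (0, 1))‖ₑ) (e.symm (y, s)) =
      2 * ENNReal.ofReal (fiberSup (fun z => (e z).1) K u y) := by
  have hπ : Continuous fun z => (e z).1 := by fun_prop
  let γ : ℝ →ᵃ[ℝ] E := e.symm.toLinearEquiv.toLinearMap.toAffineMap.comp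
    ((AffineMap.const ℝ ℝ y).prod (AffineMap.id ℝ ℝ))
  have hγ : Function.Injective γ := e.symm.injective.comp (Prod.mk_right_injective y)
  have hmeas : MeasurableSet (γ ⁻¹' interior K) :=
    (isOpen_interior.preimage γ.continuous_of_finiteDimensional).measurableSet
  by_cases hy : y ∈ (fun z => (e z).1) '' K
  · obtain ⟨z, hz, rfl, hzu⟩ := exists_eq_fiberSup hπ hK hcont hy
    have hγz : γ (e z).2 = z := e.symm_apply_apply z
    have hmax : IsMaxOn (u ∘ γ) (γ ⁻¹' K) (e z).2 := fun s hs => by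
      have hle := le_fiberSup hπ hK hcont hs
      have hfiber : (e (γ s)).1 = (e z).1 := by
        change (e (e.symm ((e z).1, s))).1 = _
        rw [e.apply_symm_apply]
      simpa [hγz, hzu, hfiber] using hle
    rw [← hzu, ← congrArg u hγz, ← lintegral_enorm_fderiv_comp_affineMap hK hcont hu h0 hγ hdiff
      (hγz.symm ▸ hz) hmax, ← lintegral_indicator hmeas]
    rfl
  · have hnot : ∀ s, e.symm (y, s) ∉ interior K := fun s hs =>
      hy ⟨_, interior_subset hs, by simp⟩
    simp [fiberSup_of_notMem hy, indicator_of_notMem (hnot _)]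

variable [FiniteDimensional ℝ E] [MeasurableSpace E] [BorelSpace E] {μ : Measure E}
  [μ.IsAddHaarMeasure] [MeasurableSpace F] [BorelSpace F] {ν : Measure F}

lemma lintegral_enorm_fderiv_eq_lintegral_fiberSup
    (he : MeasurePreserving e μ (ν.prod volume)) (hK : IsCompact K) (hcont : ContinuousOn u K)
    (hu : ConcaveOn ℝ K u) (h0 : ∀ z ∈ frontier K, u z = 0) :
    ∫⁻ z in K, ‖fderiv ℝ u z (e.symm (0, 1))‖ₑ ∂μ =
      ∫⁻ y, 2 * ENNReal.ofReal (fiberSup (fun z => (e z).1) K u y) ∂ν := by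
  have hsymm : MeasurePreserving e.symm (ν.prod volume) μ :=
    MeasurePreserving.symm e.toHomeomorph.toMeasurableEquiv he
  have hdiff : ∀ᵐ y ∂ν, ∀ᵐ s : ℝ, e.symm (y, s) ∈ interior K →
      DifferentiableAt ℝ u (e.symm (y, s)) :=
    Measure.ae_ae_of_ae_prod
      (hsymm.quasiMeasurePreserving.ae (ae_differentiableAt_of_concaveOn μ hu))
  have hmeas : Measurable
      ((interior K).indicator fun z => ‖fderiv ℝ u z (e.symm (0, 1))‖ₑ) :=
    (measurable_fderiv_apply_const ℝ u _).enorm.indicator isOpen_interior.measurableSet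
  rw [← setLIntegral_congr (interior_ae_eq_of_null_frontier (hu.1.addHaar_frontier μ)),
    ← lintegral_indicator isOpen_interior.measurableSet,
    ← hsymm.lintegral_comp_emb e.symm.toHomeomorph.measurableEmbedding]
  refine (lintegral_prod _ (hmeas.comp hsymm.measurable).aemeasurable).trans ?_
  exact lintegral_congr_ae (hdiff.mono fun y hy => lintegral_fiber_enorm_fderiv hK hcont hu h0 hy)

lemma integral_abs_fderiv_eq_integral_fiberSup [ν.IsAddHaarMeasure]
    (he : MeasurePreserving e μ (ν.prod volume)) (hK : IsCompact K) (hcont : ContinuousOn u K)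
    (hu : ConcaveOn ℝ K u) (h0 : ∀ z ∈ frontier K, u z = 0) :
    ∫ z in K, |fderiv ℝ u z (e.symm (0, 1))| ∂μ =
      2 * ∫ y in (fun z => (e z).1) '' K, fiberSup (fun z => (e z).1) K u y ∂ν := by
  have : Nontrivial E := e.toEquiv.nontrivial
  let π : E →L[ℝ] F := (ContinuousLinearMap.fst ℝ F ℝ).comp e.toContinuousLinearMap
  have : FiniteDimensional ℝ F :=
    Module.Finite.of_surjective π.toLinearMap (Prod.fst_surjective.comp e.surjective)
  have hmeas : AEStronglyMeasurable (fiberSup π K u) (ν.restrict (π '' K)) :=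
    aestronglyMeasurable_restrict_of_concaveOn ν (concaveOn_fiberSup hK hcont hu)
  have hnonneg : ∀ y, 0 ≤ fiberSup π K u y :=
    fiberSup_nonneg fun z hz => nonneg_of_concaveOn_of_eq_zero_on_frontier hK hu h0 hz
  have hsupp : Function.support (fun y => 2 * ENNReal.ofReal (fiberSup π K u y)) ⊆ π '' K := by
    refine fun y hy => by_contra fun hyK => hy ?_
    simp [fiberSup_of_notMem hyK]
  simp only [← Real.norm_eq_abs]
  rw [integral_norm_eq_lintegral_enorm
      (measurable_fderiv_apply_const ℝ u _).aestronglyMeasurable,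
    lintegral_enorm_fderiv_eq_lintegral_fiberSup he hK hcont hu h0]
  change (∫⁻ y, 2 * ENNReal.ofReal (fiberSup π K u y) ∂ν).toReal = _
  rw [← setLIntegral_eq_of_support_subset hsupp,
    lintegral_const_mul' _ _ ENNReal.ofNat_ne_top, ENNReal.toReal_mul, ENNReal.toReal_ofNat]
  exact congrArg (2 * ·) (integral_eq_lintegral_of_nonneg_ae (.of_forall hnonneg) hmeas).symm

end Fubini

section Trapezoid

variable {f : ℝ → ℝ} {a b : ℝ}

lemma add_le_add_reflect_of_concaveOn (hf : ConcaveOn ℝ (Icc a b) f) {x : ℝ}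
    (hx : x ∈ Icc a b) : f a + f b ≤ f x + f (a + b - x) := by
  have hab : a ≤ b := hx.1.trans hx.2
  obtain ⟨s, t, hs, ht, hst, rfl⟩ := (Convex.mem_Icc hab).1 hx
  have hswap : a + b - (s * a + t * b) = t * a + s * b := by linear_combination -(a + b) * hst
  have hx₁ := hf.2 (left_mem_Icc.2 hab) (right_mem_Icc.2 hab) hs ht hst
  have hx₂ := hf.2 (left_mem_Icc.2 hab) (right_mem_Icc.2 hab) ht hs (by rwa [add_comm])
  simp only [smul_eq_mul] at hx₁ hx₂
  rw [hswap]
  linear_combination hx₁ + hx₂ - (f a + f b) * hst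

lemma integrableOn_Icc_of_concaveOn (hf : ConcaveOn ℝ (Icc a b) f) :
    IntegrableOn f (Icc a b) := by
  have hlow : ∀ x ∈ Icc a b, min (f a) (f b) ≤ f x := fun x hx =>
    hf.min_le_of_mem_Icc (left_mem_Icc.2 (hx.1.trans hx.2)) (right_mem_Icc.2 (hx.1.trans hx.2)) hx
  have hupp : ∀ x ∈ Icc a b, f x ≤ 2 * f ((a + b) / 2) - min (f a) (f b) := fun x hx => by
    have hx' : a + b - x ∈ Icc a b := ⟨by linarith [hx.2], by linarith [hx.1]⟩
    have hmid := hf.2 hx hx' one_half_pos.le one_half_pos.le (add_halves 1)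
    simp only [smul_eq_mul, one_div_mul_eq_div, ← add_div, add_sub_cancel] at hmid
    linarith [hlow _ hx']
  exact integrable_of_le_of_le (aestronglyMeasurable_restrict_of_concaveOn volume hf)
    ((ae_restrict_iff' measurableSet_Icc).2 (.of_forall hlow))
    ((ae_restrict_iff' measurableSet_Icc).2 (.of_forall hupp))
    (integrableOn_const measure_Icc_lt_top.ne) (integrableOn_const measure_Icc_lt_top.ne)

lemma trapezoid_le_integral_of_concaveOn (hab : a ≤ b) (hf : ConcaveOn ℝ (Icc a b) f) :
    (f a + f b) / 2 * (b - a) ≤ ∫ x in a..b, f x := by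
  have hint : IntervalIntegrable f volume a b :=
    (intervalIntegrable_iff_integrableOn_Icc_of_le hab).2 (integrableOn_Icc_of_concaveOn hf)
  have hint' : IntervalIntegrable (fun x => f (a + b - x)) volume a b := by
    simpa using (hint.comp_sub_left (a + b)).symm
  have hreflect : ∫ x in a..b, f (a + b - x) = ∫ x in a..b, f x := by simp
  have hmono : ∫ _ in a..b, (f a + f b) ≤ ∫ x in a..b, (f x + f (a + b - x)) :=
    intervalIntegral.integral_mono_on hab intervalIntegrable_const (hint.add hint')
      fun x hx => add_le_add_reflect_of_concaveOn hf hx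
  rw [intervalIntegral.integral_const, intervalIntegral.integral_add hint hint', hreflect,
    smul_eq_mul] at hmono
  linarith

lemma half_mul_length_le_integral_of_concaveOn {c : ℝ} (hf : ConcaveOn ℝ (Icc a b) f)
    (ha : 0 ≤ f a) (hb : 0 ≤ f b) (hc : c ∈ Icc a b) :
    f c / 2 * (b - a) ≤ ∫ x in Icc a b, f x := by
  have hleft : f c / 2 * (c - a) ≤ ∫ x in a..c, f x :=
    le_trans (mul_le_mul_of_nonneg_right (by linarith) (sub_nonneg.2 hc.1))
      (trapezoid_le_integral_of_concaveOn hc.1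
        (hf.subset (Icc_subset_Icc_right hc.2) (convex_Icc a c)))
  have hright : f c / 2 * (b - c) ≤ ∫ x in c..b, f x :=
    le_trans (mul_le_mul_of_nonneg_right (by linarith) (sub_nonneg.2 hc.2))
      (trapezoid_le_integral_of_concaveOn hc.2
        (hf.subset (Icc_subset_Icc_left hc.1) (convex_Icc c b)))
  have hint : IntegrableOn f (Icc a b) := integrableOn_Icc_of_concaveOn hf
  rw [integral_Icc_eq_integral_Ioc, ← intervalIntegral.integral_of_le (hc.1.trans hc.2),
    ← intervalIntegral.integral_add_adjacent_intervals
      ((intervalIntegrable_iff_integrableOn_Icc_of_le hc.1).2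
        (hint.mono_set (Icc_subset_Icc_right hc.2)))
      ((intervalIntegrable_iff_integrableOn_Icc_of_le hc.2).2
        (hint.mono_set (Icc_subset_Icc_left hc.1)))]
  linarith

lemma setIntegral_Icc_le_of_concaveOn_of_isMaxOn {c : ℝ} (hf : ConcaveOn ℝ (Icc a b) f)
    (hab : a ≤ b) (hmax : IsMaxOn f (Icc a b) c) : ∫ x in Icc a b, f x ≤ f c * (b - a) := by
  have hmono := setIntegral_mono_on (integrableOn_Icc_of_concaveOn hf)
    (integrableOn_const (C := f c) measure_Icc_lt_top.ne) measurableSet_Icc fun x hx => hmax hx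
  simpa [hab, mul_comm] using hmono

end Trapezoid

lemma measurePreserving_of_involutive {E : Type*} [NormedAddCommGroup E] [NormedSpace ℝ E]
    [FiniteDimensional ℝ E] [MeasurableSpace E] [BorelSpace E] (μ : Measure E)
    [μ.IsAddHaarMeasure] {f : E →ₗ[ℝ] E} (hf : Function.Involutive f) :
    MeasurePreserving f μ μ := by
  have hdet : LinearMap.det f * LinearMap.det f = 1 := by
    rw [← LinearMap.det_comp, show f ∘ₗ f = LinearMap.id from LinearMap.ext hf, LinearMap.det_id]
  have habs : |LinearMap.det f| = 1 := by
    rcases mul_self_eq_one_iff.1 hdet with h | h <;> simp [h]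
  refine ⟨f.continuous_of_finiteDimensional.measurable, ?_⟩
  rw [Measure.map_linearMap_addHaar_eq_smul_addHaar μ (left_ne_zero_of_mul_eq_one hdet), abs_inv,
    habs, inv_one, ENNReal.ofReal_one, one_smul]

section Plane

variable {h : ℝ × ℝ} {Ω : Set (ℝ × ℝ)} {u : ℝ × ℝ → ℝ}

/-- The inner product with `(-h.2, h.1)`, the normal to `h`. Its level sets are the lines parallel
to `h`, and `widthPar Ω h` is the length of its range on `Ω`. -/
def normalCoord (h : ℝ × ℝ) : ℝ × ℝ →L[ℝ] ℝ :=
  -h.2 • ContinuousLinearMap.fst ℝ ℝ ℝ + h.1 • ContinuousLinearMap.snd ℝ ℝ ℝ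

/-- The coordinates of the plane in the basis `(-h.2, h.1)`, `h`. Taking the normal first makes this
map, for a unit vector `h`, a reflection: it exchanges `h` and `(0, 1)`. -/
def chordCoords (h : ℝ × ℝ) : ℝ × ℝ →L[ℝ] ℝ × ℝ :=
  (normalCoord h).prod
    (h.1 • ContinuousLinearMap.fst ℝ ℝ ℝ + h.2 • ContinuousLinearMap.snd ℝ ℝ ℝ)

lemma involutive_chordCoords (hh : h.1 ^ 2 + h.2 ^ 2 = 1) :
    Function.Involutive (chordCoords h) := by
  intro z
  ext <;> simp [chordCoords, normalCoord]
  · linear_combination z.1 * hh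
  · linear_combination z.2 * hh

lemma image_normalCoord_eq_Icc (hΩ : IsCompact Ω) (hconv : Convex ℝ Ω) (hne : Ω.Nonempty) :
    normalCoord h '' Ω = Icc (sInf (normalCoord h '' Ω)) (sSup (normalCoord h '' Ω)) :=
  eq_Icc_of_connected_compact
    ⟨hne.image _, (hconv.linear_image (normalCoord h).toLinearMap).isPreconnected⟩
    (hΩ.image (normalCoord h).continuous)

lemma widthPar_pos (hh : h ≠ 0) (hΩ : IsCompact Ω) (hconv : Convex ℝ Ω)
    (hint : (interior Ω).Nonempty) : 0 < widthPar Ω h := by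
  have hne : normalCoord h ≠ 0 := by
    contrapose! hh
    have h₁ : normalCoord h (0, 1) = 0 := by rw [hh, zero_apply]
    have h₂ : normalCoord h (1, 0) = 0 := by rw [hh, zero_apply]
    ext
    · simpa [normalCoord] using h₁
    · simpa [normalCoord] using h₂
  have hopen : (interior (normalCoord h '' Ω)).Nonempty := (hint.image _).mono
    (((normalCoord h).isOpenMap_of_ne_zero hne).image_interior_subset Ω)
  rw [image_normalCoord_eq_Icc hΩ hconv (hint.mono interior_subset), interior_Icc,
    nonempty_Ioo] at hopen
  exact sub_pos.2 hopen

lemma L1N_uh_eq_integral_fiberSup (hΩ : IsCompact Ω) (hcont : ContinuousOn u Ω)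
    (hu : ConcaveOn ℝ Ω u) (h0 : ∀ z ∈ frontier Ω, u z = 0) (hh : h.1 ^ 2 + h.2 ^ 2 = 1) :
    L1N Ω (uh h u) = 2 * ∫ y in normalCoord h '' Ω, fiberSup (normalCoord h) Ω u y := by
  have hinv := involutive_chordCoords hh
  let e : (ℝ × ℝ) ≃L[ℝ] ℝ × ℝ :=
    .equivOfInverse (chordCoords h) (chordCoords h) hinv.leftInverse hinv.leftInverse
  have he : MeasurePreserving e volume ((volume : Measure ℝ).prod volume) :=
    measurePreserving_of_involutive (f := (chordCoords h).toLinearMap) volume hinv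
  have hdir : e.symm (0, 1) = h := by
    change chordCoords h (0, 1) = h
    simp [chordCoords, normalCoord]
  have hfubini := integral_abs_fderiv_eq_integral_fiberSup he hΩ hcont hu h0
  rwa [hdir] at hfubini

lemma L1N_uh_mem_Icc (hΩ : IsCompact Ω) (hcont : ContinuousOn u Ω) (hu : ConcaveOn ℝ Ω u)
    (h0 : ∀ z ∈ frontier Ω, u z = 0) {z₀ : ℝ × ℝ} (hz₀ : z₀ ∈ Ω) (hmax : IsMaxOn u Ω z₀)
    (hh : h.1 ^ 2 + h.2 ^ 2 = 1) :
    L1N Ω (uh h u) ∈ Icc (u z₀ * widthPar Ω h) (2 * (u z₀ * widthPar Ω h)) := by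
  let π := normalCoord h
  have hIcc : π '' Ω = Icc (sInf (π '' Ω)) (sSup (π '' Ω)) :=
    image_normalCoord_eq_Icc hΩ hu.1 ⟨z₀, hz₀⟩
  have hmem : π z₀ ∈ Icc (sInf (π '' Ω)) (sSup (π '' Ω)) := hIcc ▸ mem_image_of_mem π hz₀
  have hconc : ConcaveOn ℝ (Icc (sInf (π '' Ω)) (sSup (π '' Ω))) (fiberSup π Ω u) :=
    hIcc ▸ concaveOn_fiberSup hΩ hcont hu
  have hmaxπ : IsMaxOn (fiberSup π Ω u) (Icc (sInf (π '' Ω)) (sSup (π '' Ω))) (π z₀) :=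
    hIcc ▸ isMaxOn_fiberSup π.continuous hΩ hcont hz₀ hmax
  have hnonneg : ∀ y, 0 ≤ fiberSup π Ω u y :=
    fiberSup_nonneg fun z hz => nonneg_of_concaveOn_of_eq_zero_on_frontier hΩ hu h0 hz
  have hlow := half_mul_length_le_integral_of_concaveOn hconc (hnonneg _) (hnonneg _) hmem
  have hupp := setIntegral_Icc_le_of_concaveOn_of_isMaxOn hconc (hmem.1.trans hmem.2) hmaxπ
  rw [fiberSup_eq_of_isMaxOn π.continuous hΩ hcont hz₀ hmax, ← hIcc] at hlow hupp
  rw [L1N_uh_eq_integral_fiberSup hΩ hcont hu h0 hh]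
  change _ * widthPar Ω h ≤ _ at hlow
  change _ ≤ _ * widthPar Ω h at hupp
  exact ⟨by linarith, by linarith⟩

end Plane

theorem stmt_9_general {Ω : Set (ℝ × ℝ)} (hΩ : IsCompact Ω) (hint : (interior Ω).Nonempty)
    {wmax wmin : ℝ}
    (hmax : IsGreatest {w : ℝ | ∃ h : ℝ × ℝ, h.1 ^ 2 + h.2 ^ 2 = 1 ∧ w = widthPar Ω h} wmax)
    (hmin : IsLeast {w : ℝ | ∃ h : ℝ × ℝ, h.1 ^ 2 + h.2 ^ 2 = 1 ∧ w = widthPar Ω h} wmin)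
    {u : ℝ × ℝ → ℝ} (hcont : ContinuousOn u Ω) (hu : ConcaveOn ℝ Ω u)
    (h0 : ∀ z ∈ frontier Ω, u z = 0) {h₁ h₂ : ℝ × ℝ} (hh₁ : h₁.1 ^ 2 + h₁.2 ^ 2 = 1)
    (hh₂ : h₂.1 ^ 2 + h₂.2 ^ 2 = 1) :
    L1N Ω (uh h₁ u) ≤ 2 * (wmax / wmin) * L1N Ω (uh h₂ u) := by
  obtain ⟨z₀, hz₀, hz₀max⟩ := hΩ.exists_isMaxOn (hint.mono interior_subset) hcont
  have hM : 0 ≤ u z₀ := nonneg_of_concaveOn_of_eq_zero_on_frontier hΩ hu h0 hz₀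
  have hpos : ∀ {h : ℝ × ℝ}, h.1 ^ 2 + h.2 ^ 2 = 1 → 0 < widthPar Ω h := fun hh =>
    widthPar_pos (by rintro rfl; simp at hh) hΩ hu.1 hint
  have hw₁ : widthPar Ω h₁ ≤ wmax := hmax.2 ⟨h₁, hh₁, rfl⟩
  have hw₂ : wmin ≤ widthPar Ω h₂ := hmin.2 ⟨h₂, hh₂, rfl⟩
  have hwmax : 0 < wmax := (hpos hh₁).trans_le hw₁
  have hwmin : 0 < wmin := by
    obtain ⟨h, hh, rfl⟩ := hmin.1
    exact hpos hh
  calc L1N Ω (uh h₁ u) ≤ 2 * (u z₀ * widthPar Ω h₁) :=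
        (L1N_uh_mem_Icc hΩ hcont hu h0 hz₀ hz₀max hh₁).2
    _ ≤ 2 * (u z₀ * wmax) := by gcongr
    _ = 2 * (wmax / wmin) * (u z₀ * wmin) := by field_simp
    _ ≤ 2 * (wmax / wmin) * (u z₀ * widthPar Ω h₂) := by gcongr
    _ ≤ 2 * (wmax / wmin) * L1N Ω (uh h₂ u) := by
        gcongr
        exact (L1N_uh_mem_Icc hΩ hcont hu h0 hz₀ hz₀max hh₂).1

/-- Theorem 4: with `wmax`, `wmin` the largest and smallest widths of `Ω`,
`‖u_{h₁}‖₁ ≤ 2 (wmax/wmin) ‖u_{h₂}‖₁` for every `u ∈ 𝒰_Ω` and all unit vectors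
`h₁, h₂`. -/
theorem stmt_9 (Ω : Set (ℝ × ℝ)) (hΩc : IsCompact Ω) (hΩconv : Convex ℝ Ω)
    (hΩint : (interior Ω).Nonempty)
    (wmax wmin : ℝ)
    (hmax : IsGreatest {w : ℝ | ∃ h : ℝ × ℝ, h.1 ^ 2 + h.2 ^ 2 = 1 ∧ w = widthPar Ω h} wmax)
    (hmin : IsLeast {w : ℝ | ∃ h : ℝ × ℝ, h.1 ^ 2 + h.2 ^ 2 = 1 ∧ w = widthPar Ω h} wmin)
    (u : ℝ × ℝ → ℝ) (hu : MemU Ω u)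
    (h₁ h₂ : ℝ × ℝ) (hh₁ : h₁.1 ^ 2 + h₁.2 ^ 2 = 1) (hh₂ : h₂.1 ^ 2 + h₂.2 ^ 2 = 1) :
    L1N Ω (uh h₁ u) ≤ 2 * (wmax / wmin) * L1N Ω (uh h₂ u) :=
  stmt_9_general hΩc hΩint hmax hmin hu.1 hu.2.1 hu.2.2.1 hh₁ hh₂
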